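/- With the MDL hyperparameter calibration, the sum of the segment-wise marginal log-likelihoods approximates the MDL criterion with explicit error bound: | Σ_{i=1}^{m+1} L_i − MDL(m) | ≤ (m+1) · (16/105) · (min_{1 ≤ i ≤ m+1} n_i)^{−7/2}. -/

import Mathlib

/-!
Write `log Γ(x) = (x - 1/2) log x - x + log(2π)/2 + R₄(x) + ε(x)`. Inserting this in `segLogML`, the
calibration `mdlF` is designed so that everything cancels against the MDL criterion except
`ε((nᵢ + √nᵢ)/2) - ε(√nᵢ/2)` (`segLogML_eq`). It remains to show `-1/(1680 x⁷) ≤ ε(x) ≤ 0`: both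
remainders then lie in `[-8/105 nᵢ^(-7/2), 0]`, so their difference is at most `8/105 nᵢ^(-7/2)` in
absolute value, and summing over the segments gives the claim with a factor `2` to spare.

For the bound on `ε` (`stirlingRem`), put `t = 1/(2x+1)`. Then `t (ε(x) - ε(x+1))` equals `artanh t`
minus an explicit rational function of `t` (`stirlingRem_sub`); it vanishes at `t = 0` and its
derivative is a rational function that is visibly nonpositive on `[0, 1)`. Adding the increment of
`1/(1680 x⁷)` makes the derivative nonnegative. So along `x, x+1, x+2, …` the sequence `ε` increases
and `ε + 1/(1680 x⁷)` decreases. Both tend to `0` (`tendsto_stirlingRem`), which gives the two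
inequalities.
-/

open Real
open scoped BigOperators

/-- `R₄(x) = 1/(12x) − 1/(360x³) + 1/(1260x⁵)`. -/
noncomputable def R4 (x : ℝ) : ℝ := 1 / (12 * x) - 1 / (360 * x ^ 3) + 1 / (1260 * x ^ 5)

/-- `ΔR_{4,i} = R₄((n_i + √n_i)/2) − R₄(√n_i/2)`. -/
noncomputable def deltaR4 (ni : ℝ) : ℝ := R4 ((ni + Real.sqrt ni) / 2) - R4 (Real.sqrt ni / 2)

/-- The MDL calibration
`f_i = ((max(1,m))^{1/(m+1)} · n_i^{1/4} · T / (1/√n_i + 1)^{1/2})^{2/K} · exp((2/K)ΔR_{4,i})`. -/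
noncomputable def mdlF (K m : ℕ) (T ni : ℝ) : ℝ :=
  ((max 1 m : ℕ) ^ ((1 : ℝ) / ((m : ℝ) + 1)) * ni ^ ((1 : ℝ) / 4) * T /
      (1 / Real.sqrt ni + 1) ^ ((1 : ℝ) / 2)) ^ ((2 : ℝ) / (K : ℝ)) *
    Real.exp ((2 / (K : ℝ)) * deltaR4 ni)

/-- `g_i = f_i n_i − 1`. -/
noncomputable def mdlG (K m : ℕ) (T ni : ℝ) : ℝ := mdlF K m T ni * ni - 1

/-- Segment marginal log-likelihood under the MDL calibration (with `ν_i = √n_i`,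
`s̲_i = s_i/√n_i`):
`L_i = −(n_i/2) ln(2π) − (K/2) ln(1 + g_i) + ln Γ((n_i + ν_i)/2) − ln Γ(ν_i/2)
       + (ν_i/2) ln(s̲_i/2) − ((n_i + ν_i)/2) ln((s̲_i + s_i)/2)`. -/
noncomputable def segLogML (K m : ℕ) (T ni si : ℝ) : ℝ :=
  -(ni / 2) * Real.log (2 * π) - ((K : ℝ) / 2) * Real.log (1 + mdlG K m T ni) +
    Real.log (Real.Gamma ((ni + Real.sqrt ni) / 2)) -
    Real.log (Real.Gamma (Real.sqrt ni / 2)) +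
    (Real.sqrt ni / 2) * Real.log (si / Real.sqrt ni / 2) -
    ((ni + Real.sqrt ni) / 2) * Real.log ((si / Real.sqrt ni + si) / 2)

/-- The MDL criterion
`MDL(m) = Σᵢ (−(n_i/2) ln(2π s_i/n_i) − n_i/2) − ln(max(1,m)) − (m+1) ln T
          − ((K+1)/2) Σᵢ ln n_i`. -/
noncomputable def mdlCrit (K m : ℕ) (T : ℝ) (n : Fin (m + 1) → ℕ) (s : Fin (m + 1) → ℝ) : ℝ :=
  (∑ i, (-((n i : ℝ) / 2) * Real.log (2 * π * s i / (n i : ℝ)) - (n i : ℝ) / 2)) -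
    Real.log ((max 1 m : ℕ) : ℝ) - ((m : ℝ) + 1) * Real.log T -
    (((K : ℝ) + 1) / 2) * ∑ i, Real.log ((n i : ℝ))

open Filter Topology

/-- `artanh t - t · (1 + R₄(x) - R₄(x + 1))` for `x = (1 - t) / (2t)`, that is `t = 1 / (2x + 1)`,
written as a rational function of `t` so that it makes sense at `t = 0`, where it vanishes. -/
noncomputable def artanhDefect (t : ℝ) : ℝ :=
  (log (1 + t) - log (1 - t)) / 2 - t - (4 * t ^ 3 / (1 - t ^ 2) / 12
    - 16 * t ^ 5 * (3 + t ^ 2) / (1 - t ^ 2) ^ 3 / 360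
    + 64 * t ^ 7 * (5 + 10 * t ^ 2 + t ^ 4) / (1 - t ^ 2) ^ 5 / 1260)

/-- `t · (1 / (1680 x⁷) - 1 / (1680 (x + 1)⁷))` in the variable `t = 1 / (2x + 1)`. -/
noncomputable def seventhTerm (t : ℝ) : ℝ :=
  256 * t ^ 9 * (7 + 35 * t ^ 2 + 21 * t ^ 4 + t ^ 6) / (1 - t ^ 2) ^ 7 / 1680

lemma hasDerivAt_artanhDefect {t : ℝ} (h0 : 0 ≤ t) (h1 : t < 1) :
    HasDerivAt artanhDefect
      (-(t ^ 8 * (48 / 5 - 32 / 15 * t ^ 2 + 208 / 315 * t ^ 4) / (1 - t ^ 2) ^ 6)) t := by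
  have hp : 1 + t ≠ 0 := by positivity
  have hm : 1 - t ≠ 0 := by linarith
  have hw : 1 - t ^ 2 ≠ 0 := by nlinarith
  have hid := hasDerivAt_id' t
  have hW : HasDerivAt (fun t : ℝ => 1 - t ^ 2) (-(2 * t)) t := by
    simpa using (hid.pow 2).const_sub 1
  have l1 := (hid.const_add 1).log hp
  have l2 := (hid.const_sub 1).log hm
  have q1 := (((hid.pow 3).const_mul 4).div hW hw).div_const 12
  have q3 := ((((hid.pow 5).const_mul 16).mul ((hid.pow 2).const_add 3)).div (hW.pow 3)
    (pow_ne_zero 3 hw)).div_const 360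
  have q5 := ((((hid.pow 7).const_mul 64).mul
    ((((hid.pow 2).const_mul 10).const_add 5).add (hid.pow 4))).div (hW.pow 5)
    (pow_ne_zero 5 hw)).div_const 1260
  have key := (((l1.sub l2).div_const 2).sub hid).sub ((q1.sub q3).add q5)
  refine HasDerivAt.congr_deriv (f := artanhDefect) key ?_
  have e : 1 / (1 + t) - -1 / (1 - t) = 2 / (1 - t ^ 2) := by
    field_simp; ring
  simp only [Pi.pow_apply, Pi.mul_apply, Pi.add_apply]
  rw [e]
  field_simp
  ring

lemma hasDerivAt_artanhDefect_add {t : ℝ} (h0 : 0 ≤ t) (h1 : t < 1) :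
    HasDerivAt (fun t => artanhDefect t + seventhTerm t)
      (t ^ 10 * (256 / 3 + 13568 / 315 * t ^ 2 + 2816 / 315 * t ^ 4 - 256 / 315 * t ^ 6)
        / (1 - t ^ 2) ^ 8) t := by
  have hw : 1 - t ^ 2 ≠ 0 := by nlinarith
  have hid := hasDerivAt_id' t
  have hW : HasDerivAt (fun t : ℝ => 1 - t ^ 2) (-(2 * t)) t := by
    simpa using (hid.pow 2).const_sub 1
  have q7 := ((((hid.pow 9).const_mul 256).mul
    (((((hid.pow 2).const_mul 35).const_add 7).add ((hid.pow 4).const_mul 21)).add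
      (hid.pow 6))).div (hW.pow 7) (pow_ne_zero 7 hw)).div_const 1680
  refine HasDerivAt.congr_deriv (f := fun t => artanhDefect t + seventhTerm t)
    ((hasDerivAt_artanhDefect h0 h1).add q7) ?_
  simp only [Pi.pow_apply, Pi.mul_apply, Pi.add_apply]
  field_simp
  ring

lemma artanhDefect_nonpos {t : ℝ} (h0 : 0 ≤ t) (h1 : t < 1) : artanhDefect t ≤ 0 := by
  have hanti : AntitoneOn artanhDefect (Set.Ico 0 1) := by
    refine antitoneOn_of_hasDerivWithinAt_nonpos (convex_Ico 0 1)
      (fun x hx => (hasDerivAt_artanhDefect hx.1 hx.2).continuousAt.continuousWithinAt)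
      (fun x hx => (hasDerivAt_artanhDefect (interior_subset hx).1
        (interior_subset hx).2).hasDerivWithinAt) (fun x hx => ?_)
    have hx2 : x ^ 2 < 1 := by nlinarith [(interior_subset hx).1, (interior_subset hx).2]
    have : 0 ≤ 48 / 5 - 32 / 15 * x ^ 2 + 208 / 315 * x ^ 4 := by nlinarith [sq_nonneg (x ^ 2)]
    rw [neg_nonpos]
    positivity
  simpa [artanhDefect] using hanti ⟨le_rfl, one_pos⟩ ⟨h0, h1⟩ h0

lemma artanhDefect_add_nonneg {t : ℝ} (h0 : 0 ≤ t) (h1 : t < 1) :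
    0 ≤ artanhDefect t + seventhTerm t := by
  have hmono : MonotoneOn (fun t => artanhDefect t + seventhTerm t) (Set.Ico 0 1) := by
    refine monotoneOn_of_hasDerivWithinAt_nonneg (convex_Ico 0 1)
      (fun x hx => (hasDerivAt_artanhDefect_add hx.1 hx.2).continuousAt.continuousWithinAt)
      (fun x hx => (hasDerivAt_artanhDefect_add (interior_subset hx).1
        (interior_subset hx).2).hasDerivWithinAt) (fun x hx => ?_)
    have hx2 : x ^ 2 < 1 := by nlinarith [(interior_subset hx).1, (interior_subset hx).2]
    have hx6 : x ^ 6 ≤ 1 := pow_le_one₀ (interior_subset hx).1 (interior_subset hx).2.le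
    have : 0 ≤ 256 / 3 + 13568 / 315 * x ^ 2 + 2816 / 315 * x ^ 4 - 256 / 315 * x ^ 6 := by
      have := sq_nonneg x
      have : 0 ≤ x ^ 4 := by positivity
      linarith
    positivity
  simpa [artanhDefect, seventhTerm] using hmono ⟨le_rfl, one_pos⟩ ⟨h0, h1⟩ h0

/-- The error of Stirling's series for `log Γ` truncated after the `x⁻⁵` term. -/
noncomputable def stirlingRem (x : ℝ) : ℝ :=
  log (Gamma x) - ((x - 1 / 2) * log x - x + log (2 * π) / 2 + R4 x)

/-- The increment of the remainder is elementary because `Γ(x + 1) = x Γ(x)` and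
`(x + 1/2) log(1 + 1/x) = artanh t / t` with `t = 1 / (2x + 1)`. -/
lemma stirlingRem_sub {x : ℝ} (hx : 0 < x) :
    stirlingRem x - stirlingRem (x + 1) = (2 * x + 1) * artanhDefect (1 / (2 * x + 1)) := by
  have hG : log (Gamma (x + 1)) = log x + log (Gamma x) := by
    rw [Gamma_add_one hx.ne', log_mul hx.ne' (Gamma_pos_of_pos hx).ne']
  have hlog : log (1 + 1 / (2 * x + 1)) - log (1 - 1 / (2 * x + 1)) = log (x + 1) - log x := by
    rw [show 1 + 1 / (2 * x + 1) = (2 * (x + 1)) / (2 * x + 1) by field_simp; ring,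
      show 1 - 1 / (2 * x + 1) = (2 * x) / (2 * x + 1) by field_simp; ring,
      log_div (by positivity) (by positivity), log_div (by positivity) (by positivity),
      log_mul (by positivity) (by positivity), log_mul (by positivity) (by positivity)]
    ring
  have hw : 1 - (1 / (2 * x + 1)) ^ 2 = 4 * x * (x + 1) / (2 * x + 1) ^ 2 := by
    field_simp; ring
  rw [artanhDefect, hlog, hw, stirlingRem, stirlingRem, hG, R4, R4]
  generalize log (x + 1) = a
  generalize log x = b
  field_simp
  ring

lemma seventhTerm_eq {x : ℝ} (hx : 0 < x) :
    (2 * x + 1) * seventhTerm (1 / (2 * x + 1))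
      = 1 / (1680 * x ^ 7) - 1 / (1680 * (x + 1) ^ 7) := by
  have hw : 1 - (1 / (2 * x + 1)) ^ 2 = 4 * x * (x + 1) / (2 * x + 1) ^ 2 := by
    field_simp; ring
  rw [seventhTerm, hw]
  field_simp
  ring

lemma tendsto_R4 : Tendsto R4 atTop (𝓝 0) := by
  have h : ∀ (c : ℝ) (k : ℕ), 0 < c → k ≠ 0 →
      Tendsto (fun x : ℝ => 1 / (c * x ^ k)) atTop (𝓝 0) := fun c k hc hk => by
    simpa only [one_div, Function.comp_def] using
      tendsto_inv_atTop_zero.comp ((tendsto_pow_atTop hk).const_mul_atTop hc)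
  have := ((h 12 1 (by norm_num) (by norm_num)).sub (h 360 3 (by norm_num) (by norm_num))).add
    (h 1260 5 (by norm_num) (by norm_num))
  simp only [pow_one, sub_zero, add_zero] at this
  exact this

/-- Euler's limit formula reduces `log Γ(x + N + 1)` to `x log N + log N!`, and `log N!` is given
by Stirling's formula for factorials. -/
lemma tendsto_stirlingRem {x : ℝ} (hx : 0 < x) :
    Tendsto (fun N : ℕ => stirlingRem (x + N)) atTop (𝓝 0) := by
  rw [← tendsto_add_atTop_iff_nat 1]
  have hA : Tendsto (fun N : ℕ => log (Gamma x) - BohrMollerup.logGammaSeq x N) atTop (𝓝 0) := by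
    simpa using (BohrMollerup.tendsto_log_gamma hx).const_sub (log (Gamma x))
  have hS : Tendsto (fun N : ℕ => log (Stirling.stirlingSeq N) - log π / 2) atTop (𝓝 0) := by
    have h := Stirling.tendsto_stirlingSeq_sqrt_pi.log (by positivity)
    rw [log_sqrt pi_pos.le] at h
    simpa using h.sub_const (log π / 2)
  have hN : Tendsto (fun N : ℕ => (N : ℝ) * log (1 + (x + 1) / N) - (x + 1)) atTop (𝓝 0) := by
    simpa using ((tendsto_mul_log_one_add_div_atTop (x + 1)).comp
      tendsto_natCast_atTop_atTop).sub_const (x + 1)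
  have hl : Tendsto (fun N : ℕ => (x + 1 / 2) * log (1 + (x + 1) / N)) atTop (𝓝 0) := by
    have h : Tendsto (fun N : ℕ => 1 + (x + 1) / (N : ℝ)) atTop (𝓝 (1 + 0)) :=
      (tendsto_const_div_atTop_nhds_zero_nat (x + 1)).const_add 1
    simpa using (h.log (by norm_num)).const_mul (x + 1 / 2)
  have hR : Tendsto (fun N : ℕ => R4 (x + (N + 1 : ℕ))) atTop (𝓝 0) :=
    tendsto_R4.comp (tendsto_atTop_add_const_left _ x
      (tendsto_natCast_atTop_atTop.comp (tendsto_add_atTop_nat 1)))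
  have key := (((hA.add hS).sub hl).sub hN).sub hR
  simp only [add_zero, sub_zero] at key
  refine key.congr' ?_
  filter_upwards [eventually_gt_atTop 0] with N hN0
  have hNr : (0 : ℝ) < N := by exact_mod_cast hN0
  have hG := BohrMollerup.f_add_nat_eq (f := fun y => log (Gamma y)) (fun {y} hy => by
    rw [Gamma_add_one hy.ne', log_mul hy.ne' (Gamma_pos_of_pos hy).ne', add_comm]) hx (N + 1)
  have hy : log (x + (N + 1 : ℕ)) = log N + log (1 + (x + 1) / N) := by
    rw [← log_mul hNr.ne' (by positivity)]
    congr 1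
    push_cast
    field_simp
    ring
  rw [stirlingRem, hG, hy, BohrMollerup.logGammaSeq, Stirling.log_stirlingSeq_formula,
    log_div hNr.ne' (exp_ne_zero 1), log_exp, log_mul two_ne_zero hNr.ne',
    log_mul two_ne_zero pi_ne_zero]
  push_cast
  ring

lemma stirlingRem_nonpos {x : ℝ} (hx : 0 < x) : stirlingRem x ≤ 0 := by
  have hmono : Monotone (fun N : ℕ => stirlingRem (x + N)) := monotone_nat_of_le_succ fun N => by
    have hy : 0 < x + N := by positivity
    have h := stirlingRem_sub hy
    have hd := artanhDefect_nonpos (t := 1 / (2 * (x + N) + 1)) (by positivity)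
      (by rw [div_lt_one (by positivity)]; linarith)
    have := mul_nonpos_of_nonneg_of_nonpos (by positivity : 0 ≤ 2 * (x + N) + 1) hd
    rw [Nat.cast_succ, ← add_assoc]
    linarith
  simpa using hmono.ge_of_tendsto (tendsto_stirlingRem hx) 0

lemma neg_le_stirlingRem {x : ℝ} (hx : 0 < x) : -(1 / (1680 * x ^ 7)) ≤ stirlingRem x := by
  have hanti : Antitone (fun N : ℕ => stirlingRem (x + N) + 1 / (1680 * (x + N) ^ 7)) :=
    antitone_nat_of_succ_le fun N => by
      have hy : 0 < x + N := by positivity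
      have h := stirlingRem_sub hy
      have h' := seventhTerm_eq hy
      have hd := artanhDefect_add_nonneg (t := 1 / (2 * (x + N) + 1)) (by positivity)
        (by rw [div_lt_one (by positivity)]; linarith)
      have := mul_nonneg (by positivity : 0 ≤ 2 * (x + N) + 1) hd
      rw [Nat.cast_succ, ← add_assoc]
      linarith
  have hc : Tendsto (fun N : ℕ => 1 / (1680 * (x + (N : ℝ)) ^ 7)) atTop (𝓝 0) := by
    simpa only [one_div, Function.comp_def] using tendsto_inv_atTop_zero.comp
      (((tendsto_pow_atTop (by norm_num : 7 ≠ 0)).comp (tendsto_atTop_add_const_left _ x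
        tendsto_natCast_atTop_atTop)).const_mul_atTop (by norm_num : (0 : ℝ) < 1680))
  have := hanti.le_of_tendsto ((tendsto_stirlingRem hx).add hc) 0
  simp only [Nat.cast_zero, add_zero] at this
  linarith

/-- The calibration of `mdlF` makes every term of `segLogML` cancel against its share of the MDL
criterion, apart from the two Stirling remainders. The sample size is written as `ν ^ 2`. -/
lemma segLogML_eq (K m : ℕ) (hK : 1 ≤ K) {T ν s : ℝ} (hT : 0 < T) (hν : 0 < ν) (hs : 0 < s) :
    segLogML K m T (ν ^ 2) s =
      (-(ν ^ 2 / 2) * log (2 * π * s / ν ^ 2) - ν ^ 2 / 2)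
        - log ((max 1 m : ℕ) : ℝ) / ((m : ℝ) + 1) - log T
        - (((K : ℝ) + 1) / 2) * log (ν ^ 2)
        + (stirlingRem ((ν ^ 2 + ν) / 2) - stirlingRem (ν / 2)) := by
  have hKr : (0 : ℝ) < K := by exact_mod_cast hK
  have hM : (0 : ℝ) < ((max 1 m : ℕ) : ℝ) := by exact_mod_cast (le_max_left 1 m)
  have hsq : √(ν ^ 2) = ν := sqrt_sq hν.le
  have hν1 : 0 < 1 + ν := by positivity
  have hg : log (1 + mdlG K m T (ν ^ 2)) =
      2 / K * (log ((max 1 m : ℕ) : ℝ) / ((m : ℝ) + 1) + log ν / 2 + log T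
        - (log (1 + ν) - log ν) / 2 + deltaR4 (ν ^ 2)) + 2 * log ν := by
    have hq : 1 / ν + 1 = (1 + ν) / ν := by field_simp
    rw [mdlG, mdlF, hsq, hq, add_sub_cancel, log_mul (by positivity) (by positivity),
      log_mul (by positivity) (by positivity), log_exp, log_rpow (by positivity),
      log_div (by positivity) (by positivity), log_mul (by positivity) (by positivity),
      log_mul (by positivity) (by positivity), log_rpow hM, log_rpow (by positivity),
      log_rpow (by positivity), log_div hν1.ne' hν.ne', log_pow]
    push_cast
    ring
  have ha : (ν ^ 2 + ν) / 2 = ν * (1 + ν) / 2 := by ring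
  have hla : log ((ν ^ 2 + ν) / 2) = log ν + log (1 + ν) - log 2 := by
    rw [ha, log_div (by positivity) two_ne_zero, log_mul hν.ne' hν1.ne']
  have hlb : log (ν / 2) = log ν - log 2 := log_div hν.ne' two_ne_zero
  have hsu : log (s / ν / 2) = log s - log ν - log 2 := by
    rw [log_div (by positivity) two_ne_zero, log_div hs.ne' hν.ne']
  have hss : log ((s / ν + s) / 2) = log s + log (1 + ν) - log ν - log 2 := by
    rw [show (s / ν + s) / 2 = s * (1 + ν) / ν / 2 by field_simp,
      log_div (by positivity) two_ne_zero, log_div (by positivity) hν.ne', log_mul hs.ne' hν1.ne']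
  rw [segLogML, hg, stirlingRem, stirlingRem, deltaR4, hsq, hla, hlb, hsu, hss,
    log_div (by positivity) (by positivity), log_mul (by positivity) hs.ne', log_pow]
  push_cast
  field_simp
  ring

lemma abs_stirlingRem_sub_le {ν : ℝ} (hν : 0 < ν) :
    |stirlingRem ((ν ^ 2 + ν) / 2) - stirlingRem (ν / 2)| ≤ 8 / 105 * (1 / ν ^ 7) := by
  have ha : 0 < (ν ^ 2 + ν) / 2 := by positivity
  have hb : 0 < ν / 2 := by positivity
  have hab : 1 / (1680 * ((ν ^ 2 + ν) / 2) ^ 7) ≤ 1 / (1680 * (ν / 2) ^ 7) := by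
    gcongr
    nlinarith
  have hc : 1 / (1680 * (ν / 2) ^ 7) = 8 / 105 * (1 / ν ^ 7) := by
    field_simp; norm_num
  have h1 := stirlingRem_nonpos ha
  have h2 := stirlingRem_nonpos hb
  have h3 := neg_le_stirlingRem ha
  have h4 := neg_le_stirlingRem hb
  rw [abs_le]
  constructor <;> linarith

/-- With the MDL hyperparameter calibration, the sum of the segment-wise marginal
log-likelihoods approximates the MDL criterion with explicit error bound:
`|Σᵢ L_i − MDL(m)| ≤ (m+1) · (16/105) · (minᵢ n_i)^{−7/2}`. -/
theorem mdl_marginal_likelihood_error_bound (K m : ℕ) (hK : 1 ≤ K)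
    (n : Fin (m + 1) → ℕ) (hn : ∀ i, 1 ≤ n i)
    (s : Fin (m + 1) → ℝ) (hs : ∀ i, 0 < s i)
    (T : ℝ) (hT : T = ∑ i, (n i : ℝ)) :
    |(∑ i, segLogML K m T (n i) (s i)) - mdlCrit K m T n s| ≤
      ((m : ℝ) + 1) * (16 / 105) *
        ((Finset.univ.inf' Finset.univ_nonempty n : ℕ) : ℝ) ^ (-(7 : ℝ) / 2) := by
  have hnr : ∀ i, (0 : ℝ) < n i := fun i => by exact_mod_cast hn i
  have hTpos : 0 < T := hT ▸ Finset.sum_pos (fun i _ => hnr i) Finset.univ_nonempty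
  set p : ℕ := Finset.univ.inf' Finset.univ_nonempty n with hp
  have hp1 : (0 : ℝ) < p := by
    have : 1 ≤ p := Finset.le_inf' _ _ fun i _ => hn i
    exact_mod_cast this
  have hpn : ∀ i, (p : ℝ) ≤ n i := fun i => by
    exact_mod_cast Finset.inf'_le n (Finset.mem_univ i)
  let ε : Fin (m + 1) → ℝ := fun i =>
    stirlingRem (((n i : ℝ) + √(n i)) / 2) - stirlingRem (√(n i) / 2)
  have hε : ∀ i, |ε i| ≤ 16 / 105 * (p : ℝ) ^ (-(7 : ℝ) / 2) := fun i => by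
    have h := abs_stirlingRem_sub_le (sqrt_pos.2 (hnr i))
    rw [sq_sqrt (hnr i).le] at h
    have hpow : 1 / √(n i : ℝ) ^ 7 = (n i : ℝ) ^ (-(7 : ℝ) / 2) := by
      rw [sqrt_eq_rpow, ← rpow_natCast, ← rpow_mul (hnr i).le, one_div, ← rpow_neg (hnr i).le]
      norm_num
    have hle : (n i : ℝ) ^ (-(7 : ℝ) / 2) ≤ (p : ℝ) ^ (-(7 : ℝ) / 2) :=
      rpow_le_rpow_of_nonpos hp1 (hpn i) (by norm_num)
    have hpos : 0 ≤ (p : ℝ) ^ (-(7 : ℝ) / 2) := by positivity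
    rw [hpow] at h
    exact h.trans (by linarith)
  have hseg : ∀ i, segLogML K m T (n i) (s i) =
      (-((n i : ℝ) / 2) * log (2 * π * s i / (n i : ℝ)) - (n i : ℝ) / 2)
        - log ((max 1 m : ℕ) : ℝ) / ((m : ℝ) + 1) - log T
        - (((K : ℝ) + 1) / 2) * log (n i : ℝ) + ε i := fun i => by
    have h := segLogML_eq K m hK hTpos (sqrt_pos.2 (hnr i)) (hs i)
    rwa [sq_sqrt (hnr i).le] at h
  have hdiff : (∑ i, segLogML K m T (n i) (s i)) - mdlCrit K m T n s = ∑ i, ε i := by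
    have hm : (m : ℝ) + 1 ≠ 0 := by positivity
    simp only [hseg, mdlCrit, Finset.sum_add_distrib, Finset.sum_sub_distrib, Finset.sum_const,
      Finset.card_univ, Fintype.card_fin, nsmul_eq_mul, ← Finset.mul_sum]
    push_cast
    field_simp
    ring
  rw [hdiff]
  calc |∑ i, ε i| ≤ ∑ i, |ε i| := Finset.abs_sum_le_sum_abs _ _
    _ ≤ ∑ _i : Fin (m + 1), 16 / 105 * (p : ℝ) ^ (-(7 : ℝ) / 2) :=
        Finset.sum_le_sum fun i _ => hε i
    _ = _ := by
        rw [Finset.sum_const, Finset.card_univ, Fintype.card_fin, nsmul_eq_mul]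
        push_cast
        ring
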